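/- Let A be an n×n complex matrix with Ind(A) = k. Then A has an m-core-EP inverse if and only if rank(A^k) = rank((A^k)~ A^k). -/

import Mathlib

/-!
Write `B = A ^ k`. Since `A ^ (k + 1)` and `A ^ k` have the same rank, they have the same column
space and the same row space, so `B = A ^ (k + 1) * W` and `B = U * A ^ (k + 1)`; in particular
`A` can be cancelled on the left of matrices whose columns lie in the range of `B`.

If `X` is an m-core-EP inverse, then `P = A * X` is `~`-self-adjoint, satisfies `P * B = B`, and
factors as `B * (A * Z)`. Taking adjoints gives `B~ = B~ * P = B~ * B * (A * Z)`, whence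
`rank B = rank B~ ≤ rank (B~ * B)`.

Conversely, if `rank (B~ * B) = rank B`, then `B~ = B~ * B * M` for some `M`. With `P = B * M`
this says `B~ * P = B~`, so `P~ = P~ * P`, which makes `P` a `~`-self-adjoint idempotent with
`P * B = B`. The matrix `X = B * W * M` satisfies `A * X = P`, and the remaining identities hold
after multiplication by `A` on the left, hence hold by cancellation.
-/

open Matrix

noncomputable section

/-- The Minkowski metric matrix `G = diag(1, -1, …, -1)`. -/
def mink (n : ℕ) : Matrix (Fin n) (Fin n) ℂ :=
  Matrix.diagonal (fun i => if (i : ℕ) = 0 then 1 else -1)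

/-- The Minkowski adjoint `A~ = G A* G`. -/
def madj {n : ℕ} (A : Matrix (Fin n) (Fin n) ℂ) : Matrix (Fin n) (Fin n) ℂ :=
  mink n * Aᴴ * mink n

/-- `k` is the index of `A`: the smallest positive integer with
`rank (A^(k+1)) = rank (A^k)`. -/
def IsInd {n : ℕ} (A : Matrix (Fin n) (Fin n) ℂ) (k : ℕ) : Prop :=
  0 < k ∧ (A ^ (k + 1)).rank = (A ^ k).rank ∧
    ∀ j, 0 < j → (A ^ (j + 1)).rank = (A ^ j).rank → k ≤ j

/-- `X` is an m-core-EP inverse of `A` (with `Ind(A) = k`). -/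
def IsMCoreEP {n : ℕ} (A X : Matrix (Fin n) (Fin n) ℂ) (k : ℕ) : Prop :=
  X * A * X = X ∧ X * A ^ (k + 1) = A ^ k ∧ madj (A * X) = A * X ∧
    ∃ Z : Matrix (Fin n) (Fin n) ℂ, X = A ^ k * Z

lemma mink_mul_mink (n : ℕ) : mink n * mink n = 1 := by
  rw [mink, diagonal_mul_diagonal, ← diagonal_one]
  congr 1
  funext i
  split_ifs <;> norm_num

lemma mink_conjTranspose (n : ℕ) : (mink n)ᴴ = mink n := by
  rw [mink, diagonal_conjTranspose]
  congr 1
  funext i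
  simp only [Pi.star_apply]
  split_ifs <;> simp

lemma madj_mul {n : ℕ} (A B : Matrix (Fin n) (Fin n) ℂ) : madj (A * B) = madj B * madj A := by
  have h : ∀ C : Matrix (Fin n) (Fin n) ℂ, mink n * (mink n * C) = C := fun C => by
    rw [← mul_assoc, mink_mul_mink, one_mul]
  simp only [madj, conjTranspose_mul, mul_assoc, h]

lemma madj_madj {n : ℕ} (A : Matrix (Fin n) (Fin n) ℂ) : madj (madj A) = A := by
  have h : ∀ C : Matrix (Fin n) (Fin n) ℂ, mink n * (mink n * C) = C := fun C => by
    rw [← mul_assoc, mink_mul_mink, one_mul]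
  simp only [madj, conjTranspose_mul, mink_conjTranspose, conjTranspose_conjTranspose, mul_assoc,
    h, mink_mul_mink, mul_one]

open scoped ComplexOrder in
lemma rank_madj {n : ℕ} (A : Matrix (Fin n) (Fin n) ℂ) : (madj A).rank = A.rank := by
  have h : ∀ C : Matrix (Fin n) (Fin n) ℂ, (madj C).rank ≤ C.rank := fun C =>
    ((rank_mul_le_left _ _).trans (rank_mul_le_right _ _)).trans (rank_conjTranspose C).le
  refine le_antisymm (h A) ?_
  simpa only [madj_madj] using h (madj A)

/-- If right multiplication by `C` preserves the rank of `B`, then `B` and `B * C` have the same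
column space, so `B` is a right multiple of `B * C`. -/
lemma exists_eq_mul_of_rank_mul {n : ℕ} {B C : Matrix (Fin n) (Fin n) ℂ}
    (h : (B * C).rank = B.rank) : ∃ M, B = B * C * M := by
  have hle : LinearMap.range (B * C).mulVecLin ≤ LinearMap.range B.mulVecLin := by
    rw [mulVecLin_mul]
    exact LinearMap.range_comp_le_range _ _
  have heq := Submodule.eq_of_le_of_finrank_eq hle h
  have hcol : ∀ j, ∃ v, (B * C) *ᵥ v = B.col j := fun j => by
    have hj : B.col j ∈ LinearMap.range B.mulVecLin := ⟨Pi.single j 1, by simp⟩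
    rw [← heq] at hj
    exact hj
  choose v hv using hcol
  refine ⟨Matrix.of fun i j => v j i, ?_⟩
  ext i j
  exact (congrFun (hv j) i).symm

/-- The row-space counterpart of `exists_eq_mul_of_rank_mul`. -/
lemma exists_eq_mul_of_rank_mul' {n : ℕ} {B C : Matrix (Fin n) (Fin n) ℂ}
    (h : (C * B).rank = B.rank) : ∃ U, B = U * (C * B) := by
  obtain ⟨M, hM⟩ := exists_eq_mul_of_rank_mul (B := Bᵀ) (C := Cᵀ)
    (by rw [← transpose_mul, rank_transpose, rank_transpose, h])
  refine ⟨Mᵀ, transpose_injective ?_⟩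
  rw [transpose_mul, transpose_mul, transpose_transpose]
  exact hM

/-- `A` has an m-core-EP inverse iff `rank(A^k) = rank((A^k)~ A^k)`. -/
theorem mCoreEP_exists_iff {n k : ℕ} (A : Matrix (Fin n) (Fin n) ℂ) (hk : IsInd A k) :
    (∃ X, IsMCoreEP A X k) ↔ (A ^ k).rank = (madj (A ^ k) * A ^ k).rank := by
  obtain ⟨-, hr, -⟩ := hk
  obtain ⟨W, hW⟩ := exists_eq_mul_of_rank_mul (B := A ^ k) (C := A) (by rw [← pow_succ, hr])
  obtain ⟨U, hU⟩ := exists_eq_mul_of_rank_mul' (B := A ^ k) (C := A) (by rw [← pow_succ', hr])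
  have hcomm : A ^ k * A = A * A ^ k := by rw [← pow_succ, ← pow_succ']
  constructor
  · rintro ⟨X, -, h2, h3, Z, hZ⟩
    have hP : A * X = A ^ k * (A * Z) := by rw [hZ, ← mul_assoc, ← hcomm, mul_assoc]
    have hPB : A * X * A ^ k = A ^ k := by
      calc A * X * A ^ k = A * (X * A ^ (k + 1)) * W := by
            conv_lhs => rw [hW]
            simp only [pow_succ, mul_assoc]
        _ = A ^ k := by rw [h2, ← hcomm, ← hW]
    have hadj : madj (A ^ k) = madj (A ^ k) * A ^ k * (A * Z) := by
      calc madj (A ^ k) = madj (A * X * A ^ k) := by rw [hPB]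
        _ = madj (A ^ k) * A ^ k * (A * Z) := by rw [madj_mul, h3, hP, mul_assoc]
    refine le_antisymm ?_ (rank_mul_le_right _ _)
    calc (A ^ k).rank = (madj (A ^ k) * A ^ k * (A * Z)).rank := by rw [← hadj, rank_madj]
      _ ≤ _ := rank_mul_le_left _ _
  · intro h
    obtain ⟨M, hM⟩ := exists_eq_mul_of_rank_mul (B := madj (A ^ k)) (C := A ^ k)
      (by rw [← h, rank_madj])
    -- `A` is injective on the column space of `A ^ k`, since `A ^ k = U * (A * A ^ k)`.
    have hcancel : ∀ V V' : Matrix (Fin n) (Fin n) ℂ,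
        A * (A ^ k * V) = A * (A ^ k * V') → A ^ k * V = A ^ k * V' := fun V V' hV => by
      rw [hU]
      simp only [mul_assoc, hV]
    obtain ⟨P, hPdef⟩ : ∃ P, P = A ^ k * M := ⟨_, rfl⟩
    have hBP : madj (A ^ k) * P = madj (A ^ k) := by rw [hPdef, ← mul_assoc, ← hM]
    have hPP : madj P * P = madj P := by
      conv_lhs => rw [hPdef, madj_mul, ← hPdef, mul_assoc, hBP, ← madj_mul, ← hPdef]
    have hself : madj P = P := by
      have h1 := congrArg madj hPP
      rw [madj_mul, madj_madj, hPP] at h1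
      exact h1
    have hPB : P * A ^ k = A ^ k := by
      have h1 := congrArg madj hBP
      rwa [madj_mul, madj_madj, hself] at h1
    have hidem : P * P = P := by rwa [hself] at hPP
    have hAX : A * (A ^ k * (W * M)) = P := by
      rw [hPdef, ← mul_assoc, ← mul_assoc, ← hcomm, ← hW]
    refine ⟨A ^ k * (W * M), ?_, ?_, ?_, W * M, rfl⟩
    · rw [mul_assoc (A ^ k * (W * M)), hAX, mul_assoc]
      apply hcancel
      rw [← mul_assoc (A ^ k), ← mul_assoc A, hAX, hidem]
    · rw [mul_assoc]
      refine (hcancel _ 1 ?_).trans (mul_one _)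
      rw [← mul_assoc (A ^ k), ← mul_assoc A, hAX, mul_one, pow_succ, ← mul_assoc, hPB, hcomm]
    · rw [hAX, hself]
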